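/- (Fundamental uniqueness theorem for space curves: a curve is defined uniquely, except for position in space, by its curvature and torsion as functions of a natural parameter.) Let ψ₁, ψ₂ : ℝ → E³ be smooth unit speed curves such that for all s ∈ ℝ: ‖ψ₁''(s)‖ = ‖ψ₂''(s)‖ > 0 and ⟨ψ₁'(s) × ψ₁''(s), ψ₁'''(s)⟩ / ‖ψ₁''(s)‖² = ⟨ψ₂'(s) × ψ₂''(s), ψ₂'''(s)⟩ / ‖ψ₂''(s)‖². Then there exist a linear isometry A of E³ with determinant 1 and a vector b ∈ E³ such that ψ₂(s) = A(ψ₁(s)) + b for all s ∈ ℝ. -/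

import Mathlib

noncomputable section
open Real
open scoped RealInnerProductSpace

/-- Euclidean 3-space with the standard inner product. -/
abbrev E3 := EuclideanSpace ℝ (Fin 3)

/-- The point of `E3` with coordinates `(x, y, z)`. -/
def vec3 (x y z : ℝ) : E3 := !₂[x, y, z]

/-- The standard cross product on `E3`. -/
def cross3 (u v : E3) : E3 :=
  vec3 (u 1 * v 2 - u 2 * v 1) (u 2 * v 0 - u 0 * v 2) (u 0 * v 1 - u 1 * v 0)

/-- The third standard basis vector `e₃` of `E3`. -/
def e₃ : E3 := EuclideanSpace.single (2 : Fin 3) (1 : ℝ)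


/-! Over an orthonormal frame, `A s = ∑ᵢ ⟪e₁ᵢ s, ·⟫ e₂ᵢ s` is the isometry carrying the frame `e₁ s`
to the frame `e₂ s`. If both frames turn at the same rates `⟪eᵢ', eⱼ⟫`, then the skew-symmetry of
these rates makes the derivative of `A` cancel, so `A` is constant. By the Frenet–Serret formulas,
curvature and torsion are exactly the rates of the frame `T, N, B`; hence one isometry `A` satisfies
`A (ψ₁' s) = ψ₂' s` for all `s`, and integrating gives `ψ₂ = A ψ₁ + b`. Both frames are positively
oriented, so `det A = 1`. -/

section MovingFrame

variable {ι E : Type*} [NormedAddCommGroup E] [InnerProductSpace ℝ E]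

lemma inner_deriv_left_eq_neg_of_inner_const {f g : ℝ → E} {s c : ℝ}
    (hf : DifferentiableAt ℝ f s) (hg : DifferentiableAt ℝ g s) (hfg : ∀ t, ⟪f t, g t⟫ = c) :
    ⟪deriv f s, g s⟫ = -⟪f s, deriv g s⟫ := by
  have h := deriv_inner_apply ℝ hf hg
  simp only [hfg, deriv_const] at h
  linarith

lemma inner_deriv_self_eq_zero_of_norm_const {f : ℝ → E} {s c : ℝ}
    (hf : DifferentiableAt ℝ f s) (hc : ∀ t, ‖f t‖ = c) : ⟪f s, deriv f s⟫ = 0 := by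
  have h := inner_deriv_left_eq_neg_of_inner_const (c := c ^ 2) hf hf fun t ↦ by
    rw [real_inner_self_eq_norm_sq, hc]
  rw [real_inner_comm] at h
  linarith

/-- The connection matrix of a moving frame `e`: for an orthonormal frame, its `(i, j)` entry is the
rate at which `eᵢ` turns towards `eⱼ`, so that `eᵢ' = ∑ⱼ ωᵢⱼ eⱼ`. -/
def connectionMatrix (e : ℝ → ι → E) (s : ℝ) : Matrix ι ι ℝ :=
  .of fun i j ↦ ⟪deriv (e · i) s, e s j⟫

lemma connectionMatrix_swap {e : ℝ → ι → E} (he : ∀ s, Orthonormal ℝ (e s)) {s : ℝ}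
    {i j : ι} (hi : DifferentiableAt ℝ (e · i) s) (hj : DifferentiableAt ℝ (e · j) s) :
    connectionMatrix e s j i = -connectionMatrix e s i j := by
  classical
  simp only [connectionMatrix, Matrix.of_apply]
  rw [inner_deriv_left_eq_neg_of_inner_const hj hi fun t ↦ orthonormal_iff_ite.1 (he t) j i,
    real_inner_comm]

variable [Fintype ι]

lemma deriv_eq_sum_connectionMatrix_smul (b : ℝ → OrthonormalBasis ι ℝ E) (s : ℝ) (i : ι) :
    deriv (b · i) s = ∑ j, connectionMatrix (b · ·) s i j • b s j := by
  simp only [connectionMatrix, Matrix.of_apply, real_inner_comm, (b s).sum_repr']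

variable {b₁ b₂ : ℝ → OrthonormalBasis ι ℝ E}

lemma hasDerivAt_equiv_apply_zero {s : ℝ} (h₁ : ∀ i, DifferentiableAt ℝ (b₁ · i) s)
    (h₂ : ∀ i, DifferentiableAt ℝ (b₂ · i) s)
    (hω : connectionMatrix (b₁ · ·) s = connectionMatrix (b₂ · ·) s) (x : E) :
    HasDerivAt (fun t ↦ (b₁ t).equiv (b₂ t) (.refl ι) x) 0 s := by
  have hskew (i j : ι) : connectionMatrix (b₂ · ·) s j i = -connectionMatrix (b₂ · ·) s i j :=
    connectionMatrix_swap (fun t ↦ (b₂ t).orthonormal) (h₂ i) (h₂ j)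
  simp only [OrthonormalBasis.equiv_apply, OrthonormalBasis.repr_apply_apply, Equiv.refl_apply]
  refine (HasDerivAt.fun_sum fun i _ ↦ (((h₁ i).hasDerivAt.inner ℝ
    (hasDerivAt_const s x)).smul (h₂ i).hasDerivAt)).congr_deriv ?_
  simp only [deriv_eq_sum_connectionMatrix_smul, hω, inner_zero_right, zero_add, sum_inner,
    real_inner_smul_left, Finset.smul_sum, Finset.sum_smul, Finset.sum_add_distrib]
  rw [Finset.sum_comm]
  simp only [← Finset.sum_add_distrib]
  refine Finset.sum_eq_zero fun i _ ↦ Finset.sum_eq_zero fun j _ ↦ ?_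
  rw [hskew i j]
  module

theorem equiv_eq_of_connectionMatrix_eq (h₁ : ∀ i, Differentiable ℝ (b₁ · i))
    (h₂ : ∀ i, Differentiable ℝ (b₂ · i))
    (hω : ∀ s, connectionMatrix (b₁ · ·) s = connectionMatrix (b₂ · ·) s) (s t : ℝ) :
    (b₁ s).equiv (b₂ s) (.refl ι) = (b₁ t).equiv (b₂ t) (.refl ι) := by
  ext x
  have hderiv (r : ℝ) := hasDerivAt_equiv_apply_zero (h₁ · r) (h₂ · r) (hω r) x
  exact is_const_of_deriv_eq_zero (fun r ↦ (hderiv r).differentiableAt)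
    (fun r ↦ (hderiv r).deriv) s t

end MovingFrame

section CrossProduct

open scoped Matrix

lemma cross3_eq_toLp_cross (u v : E3) : cross3 u v = WithLp.toLp 2 (u.ofLp ⨯₃ v.ofLp) := by
  rw [cross_apply]
  rfl

lemma cross3_smul_right (c : ℝ) (u v : E3) : cross3 u (c • v) = c • cross3 u v := by
  simp only [cross3_eq_toLp_cross, WithLp.ofLp_smul, map_smul, WithLp.toLp_smul]

lemma inner_self_cross3 (u v : E3) : ⟪u, cross3 u v⟫ = 0 := by
  rw [cross3_eq_toLp_cross, EuclideanSpace.inner_eq_star_dotProduct, star_trivial,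
    dotProduct_comm, dot_self_cross]

lemma inner_cross3_self (u v : E3) : ⟪v, cross3 u v⟫ = 0 := by
  rw [cross3_eq_toLp_cross, EuclideanSpace.inner_eq_star_dotProduct, star_trivial,
    dotProduct_comm, dot_cross_self]

lemma norm_cross3_of_inner_eq_zero {u v : E3} (huv : ⟪u, v⟫ = 0) :
    ‖cross3 u v‖ = ‖u‖ * ‖v‖ := by
  rw [cross3_eq_toLp_cross, InnerProductGeometry.norm_ofLp_crossProduct,
    (InnerProductGeometry.inner_eq_zero_iff_angle_eq_pi_div_two u v).1 huv, sin_pi_div_two, mul_one]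

lemma basisFun_det_eq_inner_cross3 (u v w : E3) :
    (EuclideanSpace.basisFun (Fin 3) ℝ).toBasis.det ![u, v, w] = ⟪cross3 u v, w⟫ := by
  have hmatrix : (EuclideanSpace.basisFun (Fin 3) ℝ).toBasis.toMatrix ![u, v, w] =
      (Matrix.of ![u.ofLp, v.ofLp, w.ofLp])ᵀ := by
    ext i j
    fin_cases j <;> rfl
  calc (EuclideanSpace.basisFun (Fin 3) ℝ).toBasis.det ![u, v, w]
      = (Matrix.of ![u.ofLp, v.ofLp, w.ofLp]).det := by
        rw [Module.Basis.det_apply, hmatrix, Matrix.det_transpose]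
    _ = u.ofLp ⬝ᵥ v.ofLp ⨯₃ w.ofLp := (triple_product_eq_det _ _ _).symm
    _ = w.ofLp ⬝ᵥ u.ofLp ⨯₃ v.ofLp := (triple_product_permutation _ _ _).symm
    _ = ⟪cross3 u v, w⟫ := by
        rw [cross3_eq_toLp_cross, EuclideanSpace.inner_eq_star_dotProduct, star_trivial]

lemma differentiable_cross3 {f g : ℝ → E3} (hf : Differentiable ℝ f) (hg : Differentiable ℝ g) :
    Differentiable ℝ fun s ↦ cross3 (f s) (g s) := by
  rw [differentiable_euclidean] at hf hg ⊢
  intro i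
  fin_cases i
  · exact ((hf 1).mul (hg 2)).sub ((hf 2).mul (hg 1))
  · exact ((hf 2).mul (hg 0)).sub ((hf 0).mul (hg 2))
  · exact ((hf 0).mul (hg 1)).sub ((hf 1).mul (hg 0))

variable {u v : E3}

lemma orthonormal_cross3 (hu : ‖u‖ = 1) (hv : ‖v‖ = 1) (huv : ⟪u, v⟫ = 0) :
    Orthonormal ℝ ![u, v, cross3 u v] := by
  have hw : ‖cross3 u v‖ = 1 := by
    rw [norm_cross3_of_inner_eq_zero huv, hu, hv, mul_one]
  rw [orthonormal_iff_ite]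
  intro i j
  fin_cases i <;> fin_cases j <;>
    simp [hu, hv, huv, hw, inner_self_cross3, inner_cross3_self, real_inner_comm]

/-- The positively oriented orthonormal basis `u, v, u × v` of `E3` determined by two orthogonal
unit vectors. -/
def orthonormalBasisCross3 (hu : ‖u‖ = 1) (hv : ‖v‖ = 1) (huv : ⟪u, v⟫ = 0) :
    OrthonormalBasis (Fin 3) ℝ E3 :=
  (basisOfOrthonormalOfCardEqFinrank (orthonormal_cross3 hu hv huv) (by simp)).toOrthonormalBasis
    (by simpa using orthonormal_cross3 hu hv huv)

lemma coe_orthonormalBasisCross3 (hu : ‖u‖ = 1) (hv : ‖v‖ = 1) (huv : ⟪u, v⟫ = 0) :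
    ⇑(orthonormalBasisCross3 hu hv huv) = ![u, v, cross3 u v] := by
  simp [orthonormalBasisCross3]

lemma basisFun_det_orthonormalBasisCross3 (hu : ‖u‖ = 1) (hv : ‖v‖ = 1) (huv : ⟪u, v⟫ = 0) :
    (EuclideanSpace.basisFun (Fin 3) ℝ).toBasis.det (orthonormalBasisCross3 hu hv huv) = 1 := by
  rw [coe_orthonormalBasisCross3, basisFun_det_eq_inner_cross3, real_inner_self_eq_norm_sq,
    norm_cross3_of_inner_eq_zero huv, hu, hv, mul_one, one_pow]

lemma det_equiv_orthonormalBasisCross3 {u' v' : E3} (hu : ‖u‖ = 1) (hv : ‖v‖ = 1)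
    (huv : ⟪u, v⟫ = 0) (hu' : ‖u'‖ = 1) (hv' : ‖v'‖ = 1) (huv' : ⟪u', v'⟫ = 0) :
    LinearMap.det (((orthonormalBasisCross3 hu hv huv).equiv
      (orthonormalBasisCross3 hu' hv' huv') (.refl _)).toLinearEquiv : E3 →ₗ[ℝ] E3) = 1 := by
  set b := orthonormalBasisCross3 hu hv huv with hb
  set b' := orthonormalBasisCross3 hu' hv' huv' with hb'
  have hdet := (EuclideanSpace.basisFun (Fin 3) ℝ).toBasis.det_comp
    ((b.equiv b' (.refl _)).toLinearEquiv : E3 →ₗ[ℝ] E3) b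
  have himage : ((b.equiv b' (.refl _)).toLinearEquiv : E3 →ₗ[ℝ] E3) ∘ b = b' := by
    ext1 i
    simp
  rw [himage, hb, hb', basisFun_det_orthonormalBasisCross3, basisFun_det_orthonormalBasisCross3,
    mul_one] at hdet
  exact hdet.symm

end CrossProduct

/-- The curvature of a unit speed curve. -/
def curvature (ψ : ℝ → E3) (s : ℝ) : ℝ := ‖deriv (deriv ψ) s‖

/-- The torsion of a unit speed curve; it is `0` by convention where the curvature vanishes. -/
def torsion (ψ : ℝ → E3) (s : ℝ) : ℝ :=
  ⟪cross3 (deriv ψ s) (deriv (deriv ψ) s), deriv (deriv (deriv ψ)) s⟫ / ‖deriv (deriv ψ) s‖ ^ 2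

/-- The unit vector in the direction of the acceleration of a unit speed curve; it is `0` by
convention where the curvature vanishes. -/
def principalNormal (ψ : ℝ → E3) (s : ℝ) : E3 := (curvature ψ s)⁻¹ • deriv (deriv ψ) s

/-- A Frenet curve: a three times differentiable unit speed curve whose curvature vanishes nowhere,
so that it has a differentiable Frenet frame. -/
structure IsFrenetCurve (ψ : ℝ → E3) : Prop where
  differentiable : Differentiable ℝ ψ
  differentiable_deriv : Differentiable ℝ (deriv ψ)
  differentiable_deriv_deriv : Differentiable ℝ (deriv (deriv ψ))
  norm_deriv : ∀ s, ‖deriv ψ s‖ = 1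
  curvature_pos : ∀ s, 0 < curvature ψ s

namespace IsFrenetCurve

variable {ψ : ℝ → E3}

lemma of_contDiff (hψ : ContDiff ℝ 3 ψ) (hunit : ∀ s, ‖deriv ψ s‖ = 1)
    (hκ : ∀ s, 0 < curvature ψ s) : IsFrenetCurve ψ where
  differentiable := hψ.differentiable (by norm_num)
  differentiable_deriv := by
    simpa [iteratedDeriv_succ] using hψ.differentiable_iteratedDeriv 1 (by norm_num)
  differentiable_deriv_deriv := by
    simpa [iteratedDeriv_succ] using hψ.differentiable_iteratedDeriv 2 (by norm_num)
  norm_deriv := hunit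
  curvature_pos := hκ

lemma curvature_smul_principalNormal (h : IsFrenetCurve ψ) (s : ℝ) :
    curvature ψ s • principalNormal ψ s = deriv (deriv ψ) s :=
  smul_inv_smul₀ (h.curvature_pos s).ne' _

lemma norm_principalNormal (h : IsFrenetCurve ψ) (s : ℝ) : ‖principalNormal ψ s‖ = 1 := by
  rw [principalNormal, norm_smul, norm_inv, curvature, norm_norm]
  exact inv_mul_cancel₀ (h.curvature_pos s).ne'

lemma inner_deriv_principalNormal (h : IsFrenetCurve ψ) (s : ℝ) :
    ⟪deriv ψ s, principalNormal ψ s⟫ = 0 := by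
  rw [principalNormal, real_inner_smul_right,
    inner_deriv_self_eq_zero_of_norm_const (h.differentiable_deriv s) h.norm_deriv, mul_zero]

/-- The Frenet frame of a Frenet curve: tangent, principal normal and binormal, in this order. -/
def frenetFrame (h : IsFrenetCurve ψ) (s : ℝ) : OrthonormalBasis (Fin 3) ℝ E3 :=
  orthonormalBasisCross3 (h.norm_deriv s) (h.norm_principalNormal s)
    (h.inner_deriv_principalNormal s)

lemma coe_frenetFrame (h : IsFrenetCurve ψ) (s : ℝ) :
    ⇑(h.frenetFrame s) =
      ![deriv ψ s, principalNormal ψ s, cross3 (deriv ψ s) (principalNormal ψ s)] :=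
  coe_orthonormalBasisCross3 _ _ _

lemma differentiable_inv_curvature (h : IsFrenetCurve ψ) :
    Differentiable ℝ fun s ↦ (curvature ψ s)⁻¹ := fun s ↦
  ((h.differentiable_deriv_deriv s).norm ℝ (norm_pos_iff.1 (h.curvature_pos s))).fun_inv
    (h.curvature_pos s).ne'

lemma differentiable_principalNormal (h : IsFrenetCurve ψ) :
    Differentiable ℝ (principalNormal ψ) :=
  h.differentiable_inv_curvature.smul h.differentiable_deriv_deriv

lemma differentiable_frenetFrame (h : IsFrenetCurve ψ) (i : Fin 3) :
    Differentiable ℝ (h.frenetFrame · i) := by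
  simp only [coe_frenetFrame]
  fin_cases i
  · exact h.differentiable_deriv
  · exact h.differentiable_principalNormal
  · exact differentiable_cross3 h.differentiable_deriv h.differentiable_principalNormal

lemma inner_deriv_principalNormal_binormal (h : IsFrenetCurve ψ) (s : ℝ) :
    ⟪deriv (principalNormal ψ) s, cross3 (deriv ψ s) (principalNormal ψ s)⟫ = torsion ψ s := by
  have hderiv : deriv (principalNormal ψ) s = (curvature ψ s)⁻¹ • deriv (deriv (deriv ψ)) s +
      deriv (fun t ↦ (curvature ψ t)⁻¹) s • deriv (deriv ψ) s :=
    deriv_fun_smul (h.differentiable_inv_curvature s) (h.differentiable_deriv_deriv s)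
  rw [hderiv, principalNormal, cross3_smul_right, inner_add_left, real_inner_smul_left,
    real_inner_smul_left, real_inner_smul_right, real_inner_smul_right, inner_cross3_self, torsion,
    real_inner_comm, curvature]
  ring

theorem connectionMatrix_frenetFrame (h : IsFrenetCurve ψ) (s : ℝ) :
    connectionMatrix (h.frenetFrame · ·) s =
      !![0, curvature ψ s, 0; -curvature ψ s, 0, torsion ψ s; 0, -torsion ψ s, 0] := by
  have hskew (i j : Fin 3) : connectionMatrix (h.frenetFrame · ·) s j i =
      -connectionMatrix (h.frenetFrame · ·) s i j :=
    connectionMatrix_swap (fun t ↦ (h.frenetFrame t).orthonormal)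
      (h.differentiable_frenetFrame i s) (h.differentiable_frenetFrame j s)
  have hdiag (i : Fin 3) : connectionMatrix (h.frenetFrame · ·) s i i = 0 := by
    linarith [hskew i i]
  have hTN : connectionMatrix (h.frenetFrame · ·) s 0 1 = curvature ψ s := by
    simp [connectionMatrix, coe_frenetFrame, ← h.curvature_smul_principalNormal,
      real_inner_smul_left, h.norm_principalNormal]
  have hTB : connectionMatrix (h.frenetFrame · ·) s 0 2 = 0 := by
    simp [connectionMatrix, coe_frenetFrame, ← h.curvature_smul_principalNormal,
      real_inner_smul_left, inner_cross3_self]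
  have hNB : connectionMatrix (h.frenetFrame · ·) s 1 2 = torsion ψ s := by
    simp [connectionMatrix, coe_frenetFrame, ← h.inner_deriv_principalNormal_binormal]
  ext i j
  fin_cases i <;> fin_cases j <;> simp [hdiag, hTN, hTB, hNB, hskew 0 1, hskew 0 2, hskew 1 2]

end IsFrenetCurve

lemma eq_apply_add_const_of_deriv_eq {E F : Type*} [NormedAddCommGroup E] [NormedSpace ℝ E]
    [NormedAddCommGroup F] [NormedSpace ℝ F] {f : ℝ → E} {g : ℝ → F} (L : E →L[ℝ] F)
    (hf : Differentiable ℝ f) (hg : Differentiable ℝ g) (h : ∀ s, deriv g s = L (deriv f s))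
    (s : ℝ) : g s = L (f s) + (g 0 - L (f 0)) := by
  have hderiv (t : ℝ) : HasDerivAt (fun t ↦ g t - L (f t)) 0 t :=
    ((hg t).hasDerivAt.sub (L.hasFDerivAt.comp_hasDerivAt t (hf t).hasDerivAt)).congr_deriv
      (sub_eq_zero.2 (h t))
  rw [← is_const_of_deriv_eq_zero (fun t ↦ (hderiv t).differentiableAt)
    (fun t ↦ (hderiv t).deriv) s 0, add_sub_cancel]

theorem fundamental_uniqueness_space_curves_general {ψ₁ ψ₂ : ℝ → E3}
    (h₁ : IsFrenetCurve ψ₁) (h₂ : IsFrenetCurve ψ₂) (hκ : ∀ s, curvature ψ₁ s = curvature ψ₂ s)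
    (hτ : ∀ s, torsion ψ₁ s = torsion ψ₂ s) :
    ∃ (A : E3 ≃ₗᵢ[ℝ] E3) (b : E3),
      LinearMap.det (A.toLinearEquiv : E3 →ₗ[ℝ] E3) = 1 ∧ ∀ s, ψ₂ s = A (ψ₁ s) + b := by
  let A (s : ℝ) : E3 ≃ₗᵢ[ℝ] E3 := (h₁.frenetFrame s).equiv (h₂.frenetFrame s) (.refl _)
  have hA : ∀ s, A s = A 0 :=
    (equiv_eq_of_connectionMatrix_eq h₁.differentiable_frenetFrame h₂.differentiable_frenetFrame
      (fun s ↦ by simp only [IsFrenetCurve.connectionMatrix_frenetFrame, hκ, hτ]) · 0)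
  have htangent (s : ℝ) : deriv ψ₂ s = A 0 (deriv ψ₁ s) := by
    have h := (h₁.frenetFrame s).equiv_apply_basis (h₂.frenetFrame s) (.refl _) 0
    simp only [IsFrenetCurve.coe_frenetFrame] at h
    rw [← hA s]
    exact h.symm
  exact ⟨A 0, _, det_equiv_orthonormalBasisCross3 _ _ _ _ _ _,
    eq_apply_add_const_of_deriv_eq (A 0 : E3 →L[ℝ] E3) h₁.differentiable h₂.differentiable htangent⟩

/-- Fundamental uniqueness theorem for space curves: two unit speed curves with
the same (positive) curvature and the same torsion differ by a direct rigid
motion of E³. -/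
theorem fundamental_uniqueness_space_curves
    (ψ₁ ψ₂ : ℝ → E3)
    (hψ₁ : ContDiff ℝ (⊤ : ℕ∞) ψ₁) (hψ₂ : ContDiff ℝ (⊤ : ℕ∞) ψ₂)
    (hunit₁ : ∀ s, ‖deriv ψ₁ s‖ = 1) (hunit₂ : ∀ s, ‖deriv ψ₂ s‖ = 1)
    (hκpos : ∀ s, 0 < ‖deriv (deriv ψ₁) s‖)
    (hκeq : ∀ s, ‖deriv (deriv ψ₁) s‖ = ‖deriv (deriv ψ₂) s‖)
    (hτeq : ∀ s,
      ⟪cross3 (deriv ψ₁ s) (deriv (deriv ψ₁) s), deriv (deriv (deriv ψ₁)) s⟫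
          / ‖deriv (deriv ψ₁) s‖ ^ 2 =
      ⟪cross3 (deriv ψ₂ s) (deriv (deriv ψ₂) s), deriv (deriv (deriv ψ₂)) s⟫
          / ‖deriv (deriv ψ₂) s‖ ^ 2) :
    ∃ (A : E3 ≃ₗᵢ[ℝ] E3) (b : E3),
      LinearMap.det (A.toLinearEquiv : E3 →ₗ[ℝ] E3) = 1 ∧
      ∀ s : ℝ, ψ₂ s = A (ψ₁ s) + b := by
  exact fundamental_uniqueness_space_curves_general
    (.of_contDiff (contDiff_infty.1 hψ₁ 3) hunit₁ hκpos)
    (.of_contDiff (contDiff_infty.1 hψ₂ 3) hunit₂ fun s ↦ (hκpos s).trans_eq (hκeq s)) hκeq hτeq
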